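/- For z = a - ik ∈ ℂ, the commutator of the Euler operator with the Heisenberg-Weyl operator satisfies [D, T_z] = (1/√2)·[[0, z],[\overline{z}, 0]]·T_z as operators on S(ℝ, ℂ²). -/

import Mathlib

open Complex

/-- The Heisenberg-Weyl operator: for `z = a - i k` (so `a = z.re`, `k = -z.im`),
`(T_z u)(x) = e^{i(kx - ak/2)} u (x - a)`. -/
noncomputable def heisenbergWeyl (z : ℂ) (u : ℝ → ℂ) (x : ℝ) : ℂ :=
  Complex.exp (I * (((-z.im) : ℝ) * x - z.re * (-z.im) / 2)) * u (x - z.re)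

/-- The one-dimensional Euler operator `D = (1/√2)·[[0, x - ∂ₓ],[x + ∂ₓ, 0]]`. -/
noncomputable def EulerOp (p : (ℝ → ℂ) × (ℝ → ℂ)) : (ℝ → ℂ) × (ℝ → ℂ) :=
  (fun x => ((Real.sqrt 2 : ℂ))⁻¹ * ((x : ℂ) * p.2 x - deriv p.2 x),
   fun x => ((Real.sqrt 2 : ℂ))⁻¹ * ((x : ℂ) * p.1 x + deriv p.1 x))

/-!
`T_z` is a translation by `z.re` times a phase of frequency `-z.im`. The translation gives
`[x, T_z] = z.re • T_z`, and the phase gives `[∂ₓ, T_z] = -(i * z.im) • T_z`. The two entries of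
`√2 [D, T_z]` are therefore `[x ∓ ∂ₓ, T_z] = (z.re ± i * z.im) • T_z`.
-/

theorem heisenbergWeyl_add (z : ℂ) (u v : ℝ → ℂ) :
    heisenbergWeyl z (u + v) = heisenbergWeyl z u + heisenbergWeyl z v :=
  funext fun _ => mul_add _ _ _

theorem heisenbergWeyl_sub (z : ℂ) (u v : ℝ → ℂ) :
    heisenbergWeyl z (u - v) = heisenbergWeyl z u - heisenbergWeyl z v :=
  funext fun _ => mul_sub _ _ _

theorem heisenbergWeyl_const_smul (z c : ℂ) (u : ℝ → ℂ) :
    heisenbergWeyl z (c • u) = c • heisenbergWeyl z u :=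
  funext fun _ => mul_left_comm _ _ _

theorem heisenbergWeyl_ofReal_mul (z : ℂ) (u : ℝ → ℂ) (x : ℝ) :
    heisenbergWeyl z (ofReal * u) x = (x - z.re) * heisenbergWeyl z u x := by
  simp only [heisenbergWeyl, Pi.mul_apply, ofReal_sub]
  ring

theorem deriv_heisenbergWeyl (z : ℂ) {u : ℝ → ℂ} {x : ℝ}
    (hu : DifferentiableAt ℝ u (x - z.re)) :
    deriv (heisenbergWeyl z u) x =
      heisenbergWeyl z (deriv u) x - I * z.im * heisenbergWeyl z u x := by
  have phase_deriv :
      HasDerivAt (fun y : ℝ => I * (((-z.im : ℝ) : ℂ) * y - z.re * (-z.im) / 2))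
        (I * (((-z.im : ℝ) : ℂ) * 1)) x :=
    (((hasDerivAt_id x).ofReal_comp.const_mul _).sub_const _).const_mul _
  have translate_deriv : HasDerivAt (fun y => u (y - z.re)) (deriv u (x - z.re)) x :=
    hu.hasDerivAt.comp_sub_const x z.re
  have product_deriv : HasDerivAt (heisenbergWeyl z u) _ x :=
    phase_deriv.cexp.mul translate_deriv
  rw [product_deriv.deriv]
  simp only [heisenbergWeyl]
  push_cast
  ring

theorem ofReal_mul_sub_deriv_comm_heisenbergWeyl (z : ℂ) {u : ℝ → ℂ} {x : ℝ}
    (hu : DifferentiableAt ℝ u (x - z.re)) :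
    (ofReal * heisenbergWeyl z u - deriv (heisenbergWeyl z u)) x
        - heisenbergWeyl z (ofReal * u - deriv u) x
      = z * heisenbergWeyl z u x := by
  have hz : z.re + z.im * I = z := re_add_im z
  simp only [heisenbergWeyl_sub, Pi.sub_apply, Pi.mul_apply, heisenbergWeyl_ofReal_mul,
    deriv_heisenbergWeyl z hu]
  linear_combination heisenbergWeyl z u x * hz

theorem ofReal_mul_add_deriv_comm_heisenbergWeyl (z : ℂ) {u : ℝ → ℂ} {x : ℝ}
    (hu : DifferentiableAt ℝ u (x - z.re)) :
    (ofReal * heisenbergWeyl z u + deriv (heisenbergWeyl z u)) x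
        - heisenbergWeyl z (ofReal * u + deriv u) x
      = (starRingEnd ℂ) z * heisenbergWeyl z u x := by
  have hz : (starRingEnd ℂ) z = z.re - z.im * I := RCLike.conj_eq_re_sub_im z
  simp only [heisenbergWeyl_add, Pi.add_apply, Pi.mul_apply, heisenbergWeyl_ofReal_mul,
    deriv_heisenbergWeyl z hu]
  linear_combination -heisenbergWeyl z u x * hz

theorem eulerOp_fst (u v : ℝ → ℂ) :
    (EulerOp (u, v)).1 = (Real.sqrt 2 : ℂ)⁻¹ • (ofReal * v - deriv v) :=
  rfl

theorem eulerOp_snd (u v : ℝ → ℂ) :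
    (EulerOp (u, v)).2 = (Real.sqrt 2 : ℂ)⁻¹ • (ofReal * u + deriv u) :=
  rfl

theorem eulerOp_comm_heisenbergWeyl_general (z : ℂ) (u v : ℝ → ℂ) (x : ℝ)
    (hu : DifferentiableAt ℝ u (x - z.re)) (hv : DifferentiableAt ℝ v (x - z.re)) :
    (EulerOp (heisenbergWeyl z u, heisenbergWeyl z v)).1 x
        - heisenbergWeyl z ((EulerOp (u, v)).1) x
      = ((Real.sqrt 2 : ℂ))⁻¹ * (z * heisenbergWeyl z v x) ∧
    (EulerOp (heisenbergWeyl z u, heisenbergWeyl z v)).2 x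
        - heisenbergWeyl z ((EulerOp (u, v)).2) x
      = ((Real.sqrt 2 : ℂ))⁻¹ * ((starRingEnd ℂ) z * heisenbergWeyl z u x) := by
  constructor
  · rw [eulerOp_fst, eulerOp_fst, heisenbergWeyl_const_smul, Pi.smul_apply, Pi.smul_apply,
      ← smul_sub, ofReal_mul_sub_deriv_comm_heisenbergWeyl z hv, smul_eq_mul]
  · rw [eulerOp_snd, eulerOp_snd, heisenbergWeyl_const_smul, Pi.smul_apply, Pi.smul_apply,
      ← smul_sub, ofReal_mul_add_deriv_comm_heisenbergWeyl z hu, smul_eq_mul]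

/-- `[D, T_z] = (1/√2)·[[0, z],[\overline{z}, 0]]·T_z` on pairs of functions,
where `T_z` acts diagonally. -/
theorem eulerOp_comm_heisenbergWeyl (z : ℂ) (u v : ℝ → ℂ)
    (hu : Differentiable ℝ u) (hv : Differentiable ℝ v) (x : ℝ) :
    (EulerOp (heisenbergWeyl z u, heisenbergWeyl z v)).1 x
        - heisenbergWeyl z ((EulerOp (u, v)).1) x
      = ((Real.sqrt 2 : ℂ))⁻¹ * (z * heisenbergWeyl z v x) ∧
    (EulerOp (heisenbergWeyl z u, heisenbergWeyl z v)).2 x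
        - heisenbergWeyl z ((EulerOp (u, v)).2) x
      = ((Real.sqrt 2 : ℂ))⁻¹ * ((starRingEnd ℂ) z * heisenbergWeyl z u x) :=
  eulerOp_comm_heisenbergWeyl_general z u v x (hu _) (hv _)
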